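/- arXiv:1505.08132 — 2 statements merged into one kernel-verified Lean document; each statement's English description precedes it below -/
import Mathlib

section
/- Let n > 1, d ≥ 2, k ≥ 1. The sum of the k-th powers of all d×d matrices over Z/nZ equals (n/2)·I_2 if d = 2, n ≡ 2 (mod 4), and k > 1 with k ≡ 0, 1, 5 (mod 6); otherwise it equals the zero matrix. -/
/-!
Over a finite field `K`, evaluate the power sum at a vector `v`. The endomorphisms `f` with `f v` in
the line of `v` contribute nothing: adding to `f` a map that kills `v` does not change `(f ^ k) v`.
On the others, the transvections `x ↦ x + φ x • v` with `φ v = 0` act freely by conjugation, and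
`(f ^ k) v` sums over an orbit to a multiple of `v` given by the sum of all such forms `φ`, which is
zero unless there is exactly one nonzero `φ`, that is unless `K = 𝔽₂` and the dimension is two.

Over `ℤ/p^e` with `2 ≤ e`, the matrices divisible by `p ^ ⌈e/2⌉` form an ideal of square zero, so
that `(X + M) ^ k - M ^ k` is additive in `X` in this ideal; since the order of the ideal and the
sum of its elements vanish modulo `p ^ e`, so does the sum of `(X + M) ^ k` over all `X`.

Reducing from `ℤ/n` to `ℤ/q` multiplies the power sum by `(n / q) ^ d ^ 2`, so prime powers `q`
detect a nonzero sum only for `q = d = 2` and `n / 2` odd. There the sequence of powers of a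
`2 × 2` matrix over `𝔽₂` has period `6` from the square on, and a finite table decides.
-/

open Module

section OrbitSums

variable {G X A : Type*} [AddCommMonoid A]

theorem sum_eq_zero_of_sum_vadd_eq_zero [AddGroup G] [Fintype G] [AddAction G X] {s : Finset X}
    (hs : ∀ g : G, ∀ x ∈ s, g +ᵥ x ∈ s) (hfree : ∀ g : G, ∀ x ∈ s, g +ᵥ x = x → g = 0)
    {f : X → A} (hf : ∀ x ∈ s, ∑ g : G, f (g +ᵥ x) = 0) : ∑ x ∈ s, f x = 0 := by
  classical
  refine Finset.sum_cancels_of_partition_cancels (AddAction.orbitRel G X) fun x hx => ?_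
  have orbit_eq : {y ∈ s | (AddAction.orbitRel G X) y x} =
      Finset.univ.image fun g : G => g +ᵥ x := by
    ext y
    simp only [Finset.mem_filter, Finset.mem_image, Finset.mem_univ, true_and,
      AddAction.orbitRel_apply, AddAction.mem_orbit_iff]
    exact ⟨And.right, fun ⟨g, hg⟩ => ⟨hg ▸ hs g x hx, g, hg⟩⟩
  have vadd_injOn : Function.Injective fun g : G => g +ᵥ x := fun g h (hgh : g +ᵥ x = h +ᵥ x) =>
    (neg_add_eq_zero.mp (hfree (-h + g) x hx (by rw [add_vadd, hgh, neg_vadd_vadd]))).symm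
  rw [orbit_eq, Finset.sum_image vadd_injOn.injOn, hf x hx]

theorem map_sum_univ_eq [AddCommMonoid G] [Fintype G] (e : G ≃+ G) : e (∑ x, x) = ∑ x, x := by
  rw [map_sum]
  exact Equiv.sum_comp e.toEquiv id

end OrbitSums

section VectorSpaces

variable {K V : Type*} [Field K] [AddCommGroup V] [Module K V]

theorem exists_linearEquiv_apply_eq {x y : V} (hx : x ≠ 0) (hy : y ≠ 0) :
    ∃ e : V ≃ₗ[K] V, e x = y := by
  obtain ⟨e, he⟩ := Submodule.exists_linearEquiv_restrict_eq
    (LinearEquiv.coord K V x hx ≪≫ₗ LinearEquiv.toSpanNonzeroSingleton K V y hy)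
  refine ⟨e, ?_⟩
  rw [← he ⟨x, Submodule.mem_span_singleton_self x⟩, LinearEquiv.trans_apply,
    LinearEquiv.coord_self, LinearEquiv.toSpanNonzeroSingleton_one]

theorem sum_univ_eq_zero_of_module [Fintype V] (h : Nat.card K ≠ 2 ∨ finrank K V ≠ 1) :
    ∑ x : V, x = 0 := by
  by_contra hsum
  have eq_sum : ∀ x : V, x ≠ 0 → x = ∑ y : V, y := fun x hx => by
    obtain ⟨e, he⟩ := exists_linearEquiv_apply_eq (K := K) hsum hx
    rw [← he]
    exact map_sum_univ_eq e.toAddEquiv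
  have card_eq : Nat.card K = 2 := by
    refine Nat.card_eq_two_iff.mpr ⟨0, 1, zero_ne_one, Set.eq_univ_of_forall fun c => ?_⟩
    refine or_iff_not_imp_left.mpr fun hc => smul_left_injective K hsum ?_
    simpa using eq_sum _ (smul_ne_zero hc hsum)
  have finrank_eq : finrank K V = 1 := finrank_eq_one (∑ y : V, y) hsum fun x => by
    rcases eq_or_ne x 0 with rfl | hx
    · exact ⟨0, zero_smul K _⟩
    · exact ⟨1, by rw [one_smul, ← eq_sum x hx]⟩
  tauto

theorem natCast_card_eq_zero_of_module [Fintype V] [Nontrivial V] : (Fintype.card V : K) = 0 := by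
  obtain ⟨v, hv⟩ := exists_ne (0 : V)
  have : (Fintype.card V : K) • v = 0 := by rw [Nat.cast_smul_eq_nsmul, card_nsmul_eq_zero]
  exact (smul_eq_zero_iff_left hv).mp this

end VectorSpaces

section Endomorphisms

variable {K V : Type*} [Field K] [AddCommGroup V] [Module K V]

theorem nontrivial_ker_applyₗ (hV : 1 < finrank K V) (v : V) :
    Nontrivial (LinearMap.ker (LinearMap.applyₗ v : End K V →ₗ[K] V)) := by
  have : FiniteDimensional K V := finite_of_finrank_pos (by omega)
  refine nontrivial_of_finrank_pos (R := K) ?_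
  have rank_nullity :=
    LinearMap.finrank_range_add_finrank_ker (LinearMap.applyₗ v : End K V →ₗ[K] V)
  have range_le := Submodule.finrank_le (LinearMap.range (LinearMap.applyₗ v : End K V →ₗ[K] V))
  rw [finrank_linearMap] at rank_nullity
  nlinarith

theorem pow_apply_of_apply_eq_smul {f : End K V} {v : V} {c : K} (h : f v = c • v) (k : ℕ) :
    (f ^ k) v = c ^ k • v := by
  induction k with
  | zero => simp
  | succ k ih => rw [pow_succ, End.mul_apply, h, map_smul, ih, smul_smul, pow_succ']

open scoped Classical in
theorem sum_pow_apply_of_mem_span_eq_zero [Fintype (End K V)] (hV : 1 < finrank K V)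
    (v : V) (k : ℕ) : ∑ f : End K V with f v ∈ K ∙ v, (f ^ k) v = 0 := by
  set H : Submodule K (End K V) := LinearMap.ker (LinearMap.applyₗ v)
  have vadd_apply (X : H) (f : End K V) : (X +ᵥ f) v = f v := by
    rw [Submodule.vadd_def, vadd_eq_add, LinearMap.add_apply, show X.1 v = 0 from X.2, zero_add]
  refine sum_eq_zero_of_sum_vadd_eq_zero (G := H) (fun X f hf => ?_)
    (fun X f _ h => Subtype.ext (add_eq_right.mp h)) fun f hf => ?_
  · simpa only [Finset.mem_filter, Finset.mem_univ, true_and, vadd_apply] using hf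
  · obtain ⟨c, hc⟩ := Submodule.mem_span_singleton.mp (Finset.mem_filter.mp hf).2
    have pow_apply (X : H) : ((X +ᵥ f) ^ k) v = c ^ k • v :=
      pow_apply_of_apply_eq_smul (by rw [vadd_apply, hc]) k
    have : Nontrivial H := nontrivial_ker_applyₗ hV v
    simp only [pow_apply, Finset.sum_const, Finset.card_univ]
    rw [← Nat.cast_smul_eq_nsmul K, natCast_card_eq_zero_of_module, zero_smul]

theorem apply_self_of_mem_dualAnnihilator_span {v : V} (φ : (K ∙ v).dualAnnihilator) :
    φ.1 v = 0 :=
  (Submodule.mem_dualAnnihilator φ.1).mp φ.2 v (Submodule.mem_span_singleton_self v)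

/-- The action of the linear forms vanishing at `v` on the endomorphisms, a form `φ` acting as
conjugation by the transvection `x ↦ x + φ x • v`. -/
abbrev transvectionConj (v : V) : AddAction (K ∙ v).dualAnnihilator (End K V) where
  vadd φ f :=
    (LinearEquiv.transvection (apply_self_of_mem_dualAnnihilator_span φ)).conjRingEquiv f
  zero_vadd f := by
    change (LinearEquiv.transvection _).conj f = f
    exact congrArg (fun e => LinearEquiv.conj e f) (LinearEquiv.transvection.of_left_eq_zero v)
  add_vadd φ ψ f :=
    congrArg (fun e => LinearEquiv.conj e f) (LinearEquiv.transvection.trans_of_right_eq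
      (apply_self_of_mem_dualAnnihilator_span φ) (apply_self_of_mem_dualAnnihilator_span ψ)
      (apply_self_of_mem_dualAnnihilator_span (φ + ψ))).symm

attribute [local instance] transvectionConj

theorem transvectionConj_apply_add {v : V} (φ : (K ∙ v).dualAnnihilator) (f : End K V) (x : V) :
    (φ +ᵥ f) (x + φ.1 x • v) = f x + φ.1 (f x) • v := by
  set g := LinearEquiv.transvection (apply_self_of_mem_dualAnnihilator_span φ)
  change g (f (g.symm (g x))) = g (f x)
  rw [g.symm_apply_apply]

theorem transvectionConj_pow {v : V} (φ : (K ∙ v).dualAnnihilator) (f : End K V) (k : ℕ) :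
    (φ +ᵥ f) ^ k = φ +ᵥ f ^ k :=
  (map_pow (LinearEquiv.conjRingEquiv _) f k).symm

theorem transvectionConj_apply_self {v : V} (φ : (K ∙ v).dualAnnihilator) (f : End K V) :
    (φ +ᵥ f) v = f v + φ.1 (f v) • v := by
  simpa only [apply_self_of_mem_dualAnnihilator_span, zero_smul, add_zero] using
    transvectionConj_apply_add φ f v

theorem eq_zero_of_transvectionConj_eq_self {v : V} {φ : (K ∙ v).dualAnnihilator} {f : End K V}
    (hf : f v ∉ K ∙ v) (h : φ +ᵥ f = f) : φ = 0 := by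
  ext w
  have smul_eq : φ.1 w • f v = φ.1 (f w) • v := by
    simpa [h] using transvectionConj_apply_add φ f w
  by_contra hw
  refine hf ((Submodule.smul_mem_iff _ hw).mp ?_)
  exact smul_eq ▸ Submodule.smul_mem _ _ (Submodule.mem_span_singleton_self v)

theorem finrank_dualAnnihilator_span_singleton [FiniteDimensional K V] {v : V} (hv : v ≠ 0) :
    finrank K (K ∙ v).dualAnnihilator + 1 = finrank K V := by
  rw [← Subspace.finrank_add_finrank_dualAnnihilator_eq (K ∙ v), finrank_span_singleton hv,
    add_comm]

open scoped Classical in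
theorem sum_pow_apply_of_notMem_span_eq_zero [Fintype (End K V)]
    (hV : 1 < finrank K V) (h : Nat.card K ≠ 2 ∨ finrank K V ≠ 2) (v : V) (k : ℕ) :
    ∑ f : End K V with f v ∉ K ∙ v, (f ^ k) v = 0 := by
  rcases eq_or_ne v 0 with rfl | hv
  · simp
  have : FiniteDimensional K V := finite_of_finrank_pos (by omega)
  have : Nontrivial V := ⟨v, 0, hv⟩
  have : Finite K := .of_injective _ (FaithfulSMul.algebraMap_injective K (End K V))
  have : Finite (Dual K V) := Module.finite_of_finite K
  have := Fintype.ofFinite (K ∙ v).dualAnnihilator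
  have finrank_eq := finrank_dualAnnihilator_span_singleton (K := K) hv
  have : Nontrivial (K ∙ v).dualAnnihilator := nontrivial_of_finrank_pos (R := K) (by omega)
  have sum_forms : ∑ φ : (K ∙ v).dualAnnihilator, φ = 0 :=
    sum_univ_eq_zero_of_module (K := K) (V := (K ∙ v).dualAnnihilator) (h.imp_right (by omega))
  refine sum_eq_zero_of_sum_vadd_eq_zero (G := (K ∙ v).dualAnnihilator) (fun φ f hf => ?_)
    (fun φ f hf => eq_zero_of_transvectionConj_eq_self (Finset.mem_filter.mp hf).2) fun f _ => ?_
  · have smul_mem := Submodule.smul_mem (K ∙ v) (φ.1 (f v)) (Submodule.mem_span_singleton_self v)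
    simpa only [Finset.mem_filter, Finset.mem_univ, true_and, transvectionConj_apply_self,
      Submodule.add_mem_iff_left _ smul_mem] using hf
  · set x := (f ^ k) v
    calc ∑ φ : (K ∙ v).dualAnnihilator, ((φ +ᵥ f) ^ k) v
        = ∑ φ : (K ∙ v).dualAnnihilator, (x + φ.1 x • v) := by
          simp only [transvectionConj_pow, transvectionConj_apply_self, x]
      _ = (Fintype.card (K ∙ v).dualAnnihilator : K) • x +
            (∑ φ : (K ∙ v).dualAnnihilator, φ : (K ∙ v).dualAnnihilator).1 x • v := by
          simp [Finset.sum_add_distrib, Finset.sum_smul, Nat.cast_smul_eq_nsmul]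
      _ = 0 := by
          rw [natCast_card_eq_zero_of_module, sum_forms]
          simp

theorem sum_pow_end_eq_zero [Fintype (End K V)] (hV : 1 < finrank K V)
    (h : Nat.card K ≠ 2 ∨ finrank K V ≠ 2) (k : ℕ) : ∑ f : End K V, f ^ k = 0 := by
  classical
  ext v
  rw [LinearMap.sum_apply, ← Finset.sum_filter_add_sum_filter_not _ (fun f => f v ∈ K ∙ v),
    sum_pow_apply_of_mem_span_eq_zero hV, sum_pow_apply_of_notMem_span_eq_zero hV h, add_zero,
    LinearMap.zero_apply]

theorem sum_pow_matrix_eq_zero_of_field {ι : Type*} [Fintype ι] [DecidableEq ι] [Nontrivial ι]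
    [Fintype K] (h : Nat.card K ≠ 2 ∨ Fintype.card ι ≠ 2) (k : ℕ) :
    ∑ M : Matrix ι ι K, M ^ k = 0 := by
  have : Fintype (End K (ι → K)) := Fintype.ofEquiv _ Matrix.toLinAlgEquiv'.toEquiv
  refine Matrix.toLinAlgEquiv'.injective ?_
  rw [map_zero, map_sum, ← sum_pow_end_eq_zero (K := K) (V := ι → K) (k := k)]
  · exact Fintype.sum_equiv Matrix.toLinAlgEquiv'.toEquiv _ _ fun M => map_pow _ M k
  · rw [finrank_fintype_fun_eq_card]
    exact Fintype.one_lt_card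
  · rwa [finrank_fintype_fun_eq_card]

end Endomorphisms

section SquareZero

variable {A : Type*} [Ring A]

theorem add_pow_of_mem_of_sq_zero {I : Ideal A} (hI : ∀ x ∈ I, ∀ y ∈ I, x * y = 0)
    {x : A} (hx : x ∈ I) (a : A) (k : ℕ) :
    (x + a) ^ k = a ^ k + ∑ i ∈ Finset.range k, a ^ (k - 1 - i) * x * a ^ i := by
  induction k with
  | zero => simp
  | succ k ih =>
    have cross_eq_zero : x * ∑ i ∈ Finset.range k, a ^ (k - 1 - i) * x * a ^ i = 0 := by
      rw [Finset.mul_sum]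
      refine Finset.sum_eq_zero fun i _ => ?_
      rw [← mul_assoc, hI x hx _ (I.mul_mem_left _ hx), zero_mul]
    have mul_terms : a * ∑ i ∈ Finset.range k, a ^ (k - 1 - i) * x * a ^ i =
        ∑ i ∈ Finset.range k, a ^ (k - i) * x * a ^ i := by
      rw [Finset.mul_sum]
      refine Finset.sum_congr rfl fun i hi => ?_
      have : k - i = k - 1 - i + 1 := by grind
      rw [this, pow_succ', mul_assoc, mul_assoc, mul_assoc]
    rw [pow_succ', ih, Finset.sum_range_succ, add_mul, mul_add, mul_add, cross_eq_zero, mul_terms,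
      ← pow_succ', Nat.add_sub_cancel, Nat.sub_self, pow_zero, one_mul]
    abel

theorem sum_pow_eq_zero_of_sq_zero [Fintype A] {I : Ideal A} [Fintype I]
    (hI : ∀ x ∈ I, ∀ y ∈ I, x * y = 0) (hsum : ∑ x : I, (x : A) = 0)
    (hcard : (Fintype.card I : A) = 0) (k : ℕ) : ∑ a : A, a ^ k = 0 := by
  refine sum_eq_zero_of_sum_vadd_eq_zero (G := I) (fun _ _ _ => Finset.mem_univ _)
    (fun x a _ h => Subtype.ext (add_eq_right.mp h)) fun a _ => ?_
  calc ∑ x : I, (x + a) ^ k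
      = ∑ x : I, (a ^ k + ∑ i ∈ Finset.range k, a ^ (k - 1 - i) * x * a ^ i) :=
        Finset.sum_congr rfl fun x _ => add_pow_of_mem_of_sq_zero hI x.2 a k
    _ = Fintype.card I * a ^ k +
          ∑ i ∈ Finset.range k, a ^ (k - 1 - i) * (∑ x : I, (x : A)) * a ^ i := by
        rw [Finset.sum_add_distrib, Finset.sum_comm, Finset.sum_const, Finset.card_univ,
          nsmul_eq_mul]
        simp only [Finset.mul_sum, Finset.sum_mul]
    _ = 0 := by simp [hsum, hcard]

variable {ι R : Type*} [Fintype ι] [DecidableEq ι] [Nontrivial ι] [Ring R]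

theorem sum_mem_ideal_matrix_eq_zero (I : Ideal (Matrix ι ι R)) [Fintype I] :
    ∑ X : I, (X : Matrix ι ι R) = 0 := by
  rw [← AddSubmonoidClass.coe_finsetSum]
  set S : I := ∑ X : I, X
  ext j b
  obtain ⟨i, hij⟩ := exists_ne j
  have single_sq : Matrix.single i j (1 : R) ^ 2 = 0 := by
    rw [pow_two, Matrix.single_mul_single_of_ne _ _ _ _ hij.symm]
  obtain ⟨u, hu⟩ := IsNilpotent.isUnit_one_add ⟨2, single_sq⟩
  have transvection_smul : u • S = S := map_sum_univ_eq (DistribMulAction.toAddEquiv I u)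
  have single_mul : Matrix.single i j (1 : R) * (S : Matrix ι ι R) = 0 := by
    have := congrArg Subtype.val transvection_smul
    rw [Units.smul_def, hu] at this
    simpa [add_mul] using this
  simpa using congrFun₂ single_mul i b

end SquareZero

section Reduction

theorem sum_comp_addMonoidHom {G H M : Type*} [AddGroup G] [AddGroup H] [AddCommMonoid M]
    [Fintype G] [Fintype H] {f : G →+ H} (hf : Function.Surjective f) (φ : H → M) :
    ∑ x, φ (f x) = Nat.card f.ker • ∑ y, φ y := by
  classical
  have card_fiber (y : H) : ({x | f x = y} : Finset G).card = Nat.card f.ker := by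
    rw [AddMonoidHom.card_fiber_eq_of_mem_range f (hf y) (hf 0)]
    exact (Nat.subtype_card _ (by simp [AddMonoidHom.mem_ker])).symm
  rw [← Finset.sum_fiberwise' Finset.univ f φ, Finset.smul_sum]
  simp only [Finset.sum_const, card_fiber]

variable {ι : Type*} [Fintype ι] [DecidableEq ι] {m n : ℕ}

variable (ι) in
/-- Entrywise reduction of matrices over `ZMod n` modulo a divisor `m` of `n`. -/
abbrev matrixCastHom (h : m ∣ n) : Matrix ι ι (ZMod n) →+* Matrix ι ι (ZMod m) :=
  (ZMod.castHom h (ZMod m)).mapMatrix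

theorem matrixCastHom_surjective (h : m ∣ n) : Function.Surjective (matrixCastHom ι h) :=
  (ZMod.castHom_surjective h).comp_left.comp_left

theorem matrixCastHom_eq_zero_iff [NeZero n] {h : m ∣ n} {M : Matrix ι ι (ZMod n)} :
    matrixCastHom ι h M = 0 ↔ ∀ i j, m ∣ (M i j).val := by
  simp only [← Matrix.ext_iff, RingHom.mapMatrix_apply, Matrix.map_apply, Matrix.zero_apply,
    ZMod.castHom_apply, ZMod.cast_eq_val, ZMod.natCast_eq_zero_iff]

theorem eq_of_matrixCastHom_eq_of_coprime {a b : ℕ} [NeZero (a * b)] (hab : a.Coprime b)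
    {M N : Matrix ι ι (ZMod (a * b))}
    (ha : matrixCastHom ι (dvd_mul_right a b) M = matrixCastHom ι (dvd_mul_right a b) N)
    (hb : matrixCastHom ι (dvd_mul_left b a) M = matrixCastHom ι (dvd_mul_left b a) N) :
    M = N := by
  rw [← sub_eq_zero, ← map_sub, matrixCastHom_eq_zero_iff] at ha hb
  refine sub_eq_zero.mp (Matrix.ext fun i j => ?_)
  rw [Matrix.zero_apply, ← ZMod.val_eq_zero]
  exact Nat.eq_zero_of_dvd_of_lt (hab.mul_dvd_of_dvd_of_dvd (ha i j) (hb i j)) (ZMod.val_lt _)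

theorem eq_zero_of_forall_isPrimePow_matrixCastHom_eq_zero [NeZero n] {M : Matrix ι ι (ZMod n)}
    (h : ∀ q (hq : q ∣ n), IsPrimePow q → matrixCastHom ι hq M = 0) : M = 0 := by
  ext i j
  rw [Matrix.zero_apply, ← ZMod.natCast_zmod_val (M i j), ZMod.natCast_eq_zero_iff,
    Nat.dvd_iff_prime_pow_dvd_dvd]
  intro p s hp hps
  rcases eq_or_ne s 0 with rfl | hs
  · exact one_dvd _
  · exact matrixCastHom_eq_zero_iff.mp (h _ hps (hp.isPrimePow.pow hs)) i j

variable [NeZero n]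

theorem card_ker_matrixCastHom (h : m ∣ n) :
    Nat.card (RingHom.ker (matrixCastHom ι h)) = (n / m) ^ Fintype.card ι ^ 2 := by
  have : NeZero m := ⟨ne_zero_of_dvd_ne_zero (NeZero.ne n) h⟩
  have card_matrix (l : ℕ) [NeZero l] :
      Fintype.card (Matrix ι ι (ZMod l)) = l ^ Fintype.card ι ^ 2 := by
    rw [← Nat.card_eq_fintype_card]
    simp [Matrix, pow_two, pow_mul]
  have card_eq := sum_comp_addMonoidHom (f := (matrixCastHom ι h).toAddMonoidHom)
    (matrixCastHom_surjective h) (fun _ => 1)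
  simp only [Finset.sum_const, Finset.card_univ, card_matrix, smul_eq_mul, mul_one] at card_eq
  refine Nat.eq_of_mul_eq_mul_right (pow_pos (NeZero.pos m) (Fintype.card ι ^ 2)) ?_
  rw [← mul_pow, Nat.div_mul_cancel h]
  exact card_eq.symm

theorem matrixCastHom_sum_pow [NeZero m] (h : m ∣ n) (k : ℕ) :
    matrixCastHom ι h (∑ M, M ^ k) =
      (n / m) ^ Fintype.card ι ^ 2 • ∑ M : Matrix ι ι (ZMod m), M ^ k := by
  simp only [map_sum, map_pow]
  rw [← card_ker_matrixCastHom h]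
  exact sum_comp_addMonoidHom (f := (matrixCastHom ι h).toAddMonoidHom)
    (matrixCastHom_surjective h) (· ^ k)

end Reduction

section PowerSums

variable {ι : Type*} [Fintype ι] [DecidableEq ι] [Nontrivial ι] {n : ℕ} [NeZero n]

theorem sum_pow_matrix_zmod_eq_zero_of_dvd_sq {m : ℕ} (hmn : m ∣ n) (hnm : n ∣ m ^ 2)
    (hcard : n ∣ (n / m) ^ Fintype.card ι ^ 2) (k : ℕ) :
    ∑ M : Matrix ι ι (ZMod n), M ^ k = 0 := by
  have : NeZero m := ⟨ne_zero_of_dvd_ne_zero (NeZero.ne n) hmn⟩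
  have : Fintype (RingHom.ker (matrixCastHom ι hmn)) := Fintype.ofFinite _
  refine sum_pow_eq_zero_of_sq_zero (I := RingHom.ker (matrixCastHom ι hmn))
    (fun X hX Y hY => ?_) (sum_mem_ideal_matrix_eq_zero _) ?_ k
  · ext i j
    rw [Matrix.mul_apply, Matrix.zero_apply]
    refine Finset.sum_eq_zero fun l _ => ?_
    rw [← ZMod.natCast_zmod_val (X i l), ← ZMod.natCast_zmod_val (Y l j), ← Nat.cast_mul,
      ZMod.natCast_eq_zero_iff]
    exact hnm.trans (pow_two m ▸ mul_dvd_mul (matrixCastHom_eq_zero_iff.mp hX i l)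
      (matrixCastHom_eq_zero_iff.mp hY l j))
  · rw [← Nat.card_eq_fintype_card, card_ker_matrixCastHom, ← Matrix.diagonal_natCast,
      (ZMod.natCast_eq_zero_iff _ n).mpr hcard]
    simp

theorem sum_pow_matrix_zmod_eq_zero_of_isPrimePow (hn : IsPrimePow n)
    (h : n ≠ 2 ∨ Fintype.card ι ≠ 2) (k : ℕ) : ∑ M : Matrix ι ι (ZMod n), M ^ k = 0 := by
  by_cases n_prime : n.Prime
  · have := Fact.mk n_prime
    exact sum_pow_matrix_eq_zero_of_field (K := ZMod n) (by rwa [Nat.card_zmod]) k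
  obtain ⟨p, e, hp, he, rfl⟩ := (isPrimePow_nat_iff n).mp hn
  have one_lt_e : 1 < e := lt_of_le_of_ne he fun h => n_prime (by rwa [← h, pow_one])
  refine sum_pow_matrix_zmod_eq_zero_of_dvd_sq (m := p ^ (e - e / 2))
    (pow_dvd_pow p (Nat.sub_le _ _)) ?_ ?_ k
  · rw [← pow_mul]
    exact pow_dvd_pow p (by omega)
  · rw [Nat.pow_div (Nat.sub_le _ _) hp.pos, ← pow_mul]
    refine pow_dvd_pow p ?_
    calc e ≤ (e - (e - e / 2)) * 2 ^ 2 := by omega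
      _ ≤ (e - (e - e / 2)) * Fintype.card ι ^ 2 := by
        gcongr
        exact Fintype.one_lt_card

theorem sum_pow_matrix_zmod_eq_zero (h : Fintype.card ι ≠ 2 ∨ n % 4 ≠ 2) (k : ℕ) :
    ∑ M : Matrix ι ι (ZMod n), M ^ k = 0 := by
  refine eq_zero_of_forall_isPrimePow_matrixCastHom_eq_zero fun q hq q_primePow => ?_
  have : NeZero q := ⟨q_primePow.ne_zero⟩
  rw [matrixCastHom_sum_pow]
  by_cases hq2 : q ≠ 2 ∨ Fintype.card ι ≠ 2
  · rw [sum_pow_matrix_zmod_eq_zero_of_isPrimePow q_primePow hq2, smul_zero]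
  · obtain ⟨rfl, hι⟩ : q = 2 ∧ Fintype.card ι = 2 := by tauto
    have even_half : 2 ∣ n / 2 := by omega
    rw [← Nat.cast_smul_eq_nsmul (ZMod 2),
      (ZMod.natCast_eq_zero_iff _ 2).mpr (dvd_pow even_half (by simp [hι])), zero_smul]

theorem matrix_fin_two_zmod_two_pow_eight :
    ∀ M : Matrix (Fin 2) (Fin 2) (ZMod 2), M ^ 8 = M ^ 2 := by
  -- `X ^ 8 - X ^ 2 = (X * (X + 1) * (X ^ 2 + X + 1)) ^ 2` is divisible by every monic quadratic
  -- polynomial over `𝔽₂`, hence by every characteristic polynomial.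
  decide +kernel

theorem matrix_fin_two_zmod_two_pow_add_six_mul (M : Matrix (Fin 2) (Fin 2) (ZMod 2)) (r q : ℕ) :
    M ^ (r + 2 + 6 * q) = M ^ (r + 2) := by
  induction q with
  | zero => rfl
  | succ q ih =>
    rw [← ih, show r + 2 + 6 * (q + 1) = 8 + (r + 6 * q) by ring, pow_add,
      matrix_fin_two_zmod_two_pow_eight, ← pow_add]
    congr 1
    ring

theorem sum_pow_matrix_fin_two_zmod_two (k : ℕ) :
    ∑ M : Matrix (Fin 2) (Fin 2) (ZMod 2), M ^ k =
      if 1 < k ∧ (k % 6 = 0 ∨ k % 6 = 1 ∨ k % 6 = 5) then 1 else 0 := by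
  rcases Nat.lt_or_ge k 2 with hk | hk
  · interval_cases k <;> decide +kernel
  · obtain ⟨q, r, hr, rfl⟩ : ∃ q r, r < 6 ∧ k = r + 2 + 6 * q :=
      ⟨(k - 2) / 6, (k - 2) % 6, Nat.mod_lt _ (by norm_num), by omega⟩
    simp only [matrix_fin_two_zmod_two_pow_add_six_mul, true_and, Nat.add_mul_mod_self_left,
      show 1 < r + 2 + 6 * q by omega]
    interval_cases r <;> decide +kernel

theorem sum_pow_matrix_fin_two_zmod_two_mul {m : ℕ} [NeZero m] (hm : Odd m) (k : ℕ) :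
    ∑ M : Matrix (Fin 2) (Fin 2) (ZMod (2 * m)), M ^ k =
      if 1 < k ∧ (k % 6 = 0 ∨ k % 6 = 1 ∨ k % 6 = 5) then
        (m : Matrix (Fin 2) (Fin 2) (ZMod (2 * m))) else 0 := by
  refine eq_of_matrixCastHom_eq_of_coprime (Nat.coprime_two_left.mpr hm) ?_ ?_
  · have m_eq_one : (m : Matrix (Fin 2) (Fin 2) (ZMod 2)) = 1 := by
      rw [← Matrix.diagonal_natCast, ZMod.natCast_eq_one_iff_odd.mpr hm, Matrix.diagonal_one]
    rw [matrixCastHom_sum_pow, sum_pow_matrix_fin_two_zmod_two, Nat.mul_div_cancel_left m two_pos,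
      nsmul_eq_mul, Nat.cast_pow, m_eq_one, one_pow, one_mul, apply_ite (matrixCastHom _ _),
      map_natCast, map_zero, m_eq_one]
  · have m_eq_zero : (m : Matrix (Fin 2) (Fin 2) (ZMod m)) = 0 := by
      rw [← Matrix.diagonal_natCast, ZMod.natCast_self, Matrix.diagonal_zero]
    have : m % 4 ≠ 2 := by grind
    rw [matrixCastHom_sum_pow, sum_pow_matrix_zmod_eq_zero (.inr this), smul_zero,
      apply_ite (matrixCastHom _ _), map_natCast, map_zero, m_eq_zero, ite_self]

end PowerSums

theorem stmt_7 (n d k : ℕ) (hn : 1 < n) [NeZero n] (hd : 2 ≤ d) (hk : 1 ≤ k) :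
    ∑ M : Matrix (Fin d) (Fin d) (ZMod n), M ^ k =
    if d = 2 ∧ n % 4 = 2 ∧ 1 < k ∧ (k % 6 = 0 ∨ k % 6 = 1 ∨ k % 6 = 5)
    then ((n / 2 : ℕ) : ZMod n) • (1 : Matrix (Fin d) (Fin d) (ZMod n))
    else 0 := by
  have : Nontrivial (Fin d) := Fin.nontrivial_iff_two_le.mpr hd
  by_cases h : d = 2 ∧ n % 4 = 2
  · obtain ⟨rfl, hn4⟩ := h
    obtain ⟨m, rfl⟩ : 2 ∣ n := by omega
    have : NeZero m := ⟨by omega⟩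
    rw [sum_pow_matrix_fin_two_zmod_two_mul (by grind), Nat.mul_div_cancel_left m two_pos,
      Nat.cast_smul_eq_nsmul, nsmul_one]
    simp only [hn4, true_and]
  · rw [sum_pow_matrix_zmod_eq_zero (by simpa [Classical.or_iff_not_imp_left] using h),
      if_neg (by tauto)]
end

section
/- For n ≥ 1, the sum of the n-th powers of all 2×2 matrices over Z/nZ is nonzero if and only if n ≡ 6 (mod 12). -/
/-!
Power sums over all elements of a finite ring are compatible with products, so by the Chinese
remainder theorem everything reduces to prime power moduli `p ^ k`.

If `1 < k`, the matrices with entries in the square-zero ideal generated by `p ^ (k - k / 2)` form a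
left ideal `K` whose elements sum to `0`. Expanding `(M + Y) ^ m` for `Y ∈ K` shows that each coset
`M + K` contributes `card K • M ^ m`, which vanishes because `p ^ k ∣ card K`.

Over a field with more than two elements, every weighted sum `∑ g (tr M) (det M) • M ^ m` vanishes:
by Cayley–Hamilton it suffices to treat `m = 0` and `m = 1` for all `g` at once. Over `ZMod 2` the
powers have period `6` from exponent `2` on, so finitely many sums decide the matter.
-/

open Matrix

section PowerSums

lemma map_sum_pow_ringEquiv {A B : Type*} [Semiring A] [Semiring B] [Fintype A] [Fintype B]
    (e : A ≃+* B) (m : ℕ) : e (∑ a, a ^ m) = ∑ b, b ^ m := by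
  simp only [map_sum, map_pow]
  exact e.toEquiv.sum_comp (· ^ m)

lemma sum_pow_prod {A B : Type*} [Semiring A] [Semiring B] [Fintype A] [Fintype B] (m : ℕ) :
    ∑ x : A × B, x ^ m = (Nat.card B • ∑ a : A, a ^ m, Nat.card A • ∑ b : B, b ^ m) := by
  ext
  · simp [Prod.fst_sum, Fintype.sum_prod_type, Finset.smul_sum]
  · simp [Prod.snd_sum, Fintype.sum_prod_type_right, Finset.smul_sum]

lemma sum_pow_prod_eq_zero_iff {A B : Type*} [Ring A] [Ring B] [Fintype A] [Fintype B]
    (h : (Nat.card A).Coprime (Nat.card B)) (m : ℕ) :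
    ∑ x : A × B, x ^ m = 0 ↔ ∑ a : A, a ^ m = 0 ∧ ∑ b : B, b ^ m = 0 := by
  rw [sum_pow_prod, Prod.mk_eq_zero, h.nsmul_right_bijective.injective.eq_iff' (smul_zero _),
    h.symm.nsmul_right_bijective.injective.eq_iff' (smul_zero _)]

end PowerSums

section SquareZeroIdeal

variable {A : Type*} [Ring A] {K : Ideal A}

lemma units_mul_sum_ideal [Fintype K] (u : Aˣ) : u * ∑ y : K, (y : A) = ∑ y : K, (y : A) := by
  rw [Finset.mul_sum]
  exact Equiv.sum_comp (MulAction.toPerm u) (fun y : K ↦ (y : A))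

lemma add_pow_mul_of_mul_eq_zero (hK : ∀ y ∈ K, ∀ z ∈ K, y * z = 0) (x : A) {y z : A}
    (hy : y ∈ K) (hz : z ∈ K) (m : ℕ) : (x + y) ^ m * z = x ^ m * z := by
  induction m with
  | zero => simp only [pow_zero]
  | succ m ih =>
    rw [pow_succ', mul_assoc, ih, add_mul, hK y hy _ (K.mul_mem_left _ hz), add_zero, ← mul_assoc,
      ← pow_succ']

lemma sum_ideal_add_pow [Fintype K] (hK : ∀ y ∈ K, ∀ z ∈ K, y * z = 0)
    (hsum : ∑ y : K, (y : A) = 0) (x : A) (m : ℕ) :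
    ∑ y : K, (x + y) ^ m = Fintype.card K • x ^ m := by
  induction m with
  | zero => simp
  | succ m ih =>
    calc ∑ y : K, (x + y) ^ (m + 1)
        = (∑ y : K, (x + y) ^ m) * x + x ^ m * ∑ y : K, (y : A) := by
          rw [Finset.sum_mul, Finset.mul_sum, ← Finset.sum_add_distrib]
          refine Finset.sum_congr rfl fun y _ ↦ ?_
          rw [pow_succ, mul_add, add_pow_mul_of_mul_eq_zero hK x y.2 y.2]
      _ = Fintype.card K • x ^ (m + 1) := by
          rw [ih, hsum, mul_zero, add_zero, smul_mul_assoc, pow_succ]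

theorem sum_pow_eq_zero_of_ideal_mul_eq_zero [Fintype A] [Fintype K]
    (hK : ∀ y ∈ K, ∀ z ∈ K, y * z = 0) (hsum : ∑ y : K, (y : A) = 0)
    (hcard : (Fintype.card K : A) = 0) (m : ℕ) : ∑ a : A, a ^ m = 0 := by
  classical
  refine Finset.sum_cancels_of_partition_cancels K.quotientRel fun x _ ↦ ?_
  calc ∑ a with K.quotientRel a x, a ^ m
      = ∑ y : K, (x + y) ^ m := by
        simp only [Submodule.quotientRel_def]
        refine Finset.sum_bij' (fun a ha ↦ ⟨a - x, (Finset.mem_filter.1 ha).2⟩)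
          (fun y _ ↦ x + y) ?_ ?_ ?_ ?_ ?_ <;> simp
    _ = 0 := by
        rw [sum_ideal_add_pow hK hsum, nsmul_eq_mul, hcard, zero_mul]

end SquareZeroIdeal

section MatrixRing

lemma natCard_matrix {m n : Type*} [Finite m] [Finite n] (α : Type*) :
    Nat.card (Matrix m n α) = Nat.card α ^ (Nat.card m * Nat.card n) := by
  rw [Nat.card_congr Matrix.of.symm, Nat.card_fun, Nat.card_fun, pow_mul']

variable {ι : Type*} [Fintype ι] [DecidableEq ι]

lemma natCard_ideal_matrix {R : Type*} [Semiring R] (I : Ideal R) :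
    Nat.card (I.matrix ι) = Nat.card I ^ (Nat.card ι * Nat.card ι) := by
  let e : I.matrix ι ≃ Matrix ι ι I :=
    { toFun M := .of fun i j ↦ ⟨M.1 i j, M.2 i j⟩
      invFun N := ⟨N.map (↑), fun i j ↦ (N i j).2⟩ }
  rw [Nat.card_congr e, natCard_matrix]

lemma sum_ideal_matrix_eq_zero [Nontrivial ι] {R : Type*} [CommRing R]
    (K : Ideal (Matrix ι ι R)) [Fintype K] : ∑ Y : K, (Y : Matrix ι ι R) = 0 := by
  ext j k
  obtain ⟨i, hij⟩ := exists_ne j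
  have isUnit_transvection : IsUnit (transvection i j (1 : R)) := by
    rw [isUnit_iff_isUnit_det, det_transvection_of_ne i j hij]
    exact isUnit_one
  have row_add := congr($(units_mul_sum_ideal (K := K) isUnit_transvection.unit) i k)
  rwa [IsUnit.unit_spec, transvection_mul_apply_same, one_mul, add_eq_left] at row_add

theorem sum_matrix_pow_eq_zero_of_ideal_sq_eq_bot [Nontrivial ι] {R : Type*} [CommRing R]
    [Fintype R] {I : Ideal R} (hI : I ^ 2 = ⊥)
    (hcard : (Nat.card I : R) ^ (Nat.card ι * Nat.card ι) = 0) (m : ℕ) :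
    ∑ M : Matrix ι ι R, M ^ m = 0 := by
  have := Fintype.ofFinite (I.matrix ι)
  refine sum_pow_eq_zero_of_ideal_mul_eq_zero (K := I.matrix ι) (fun Y hY Z hZ ↦ ?_)
    (sum_ideal_matrix_eq_zero _) ?_ m
  · ext i j
    refine Finset.sum_eq_zero fun k _ ↦ ?_
    rw [← Ideal.mem_bot, ← hI, sq]
    exact Ideal.mul_mem_mul (hY i k) (hZ k j)
  · rw [← Nat.card_eq_fintype_card, natCard_ideal_matrix, ← map_natCast (algebraMap R _),
      Nat.cast_pow, hcard, map_zero]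

/-- Square matrices over a product ring are pairs of matrices, so that the Chinese remainder theorem
passes to matrix rings. -/
noncomputable def matrixProdRingEquiv (ι R S : Type*) [Fintype ι] [DecidableEq ι] [Semiring R]
    [Semiring S] : Matrix ι ι (R × S) ≃+* Matrix ι ι R × Matrix ι ι S :=
  .ofBijective ((RingHom.fst R S).mapMatrix.prod (RingHom.snd R S).mapMatrix)
    ⟨fun M N h ↦ by ext i j; exacts [congr($h.1 i j), congr($h.2 i j)],
      fun P ↦ ⟨.of fun i j ↦ (P.1 i j, P.2 i j), rfl⟩⟩

end MatrixRing

section ZModMatrix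

variable {ι : Type*} [Fintype ι] [DecidableEq ι]

theorem sum_matrix_zmod_mul_pow_eq_zero_iff {a b : ℕ} [NeZero a] [NeZero b] (hab : a.Coprime b)
    (m : ℕ) : ∑ M : Matrix ι ι (ZMod (a * b)), M ^ m = 0 ↔
      ∑ M : Matrix ι ι (ZMod a), M ^ m = 0 ∧ ∑ M : Matrix ι ι (ZMod b), M ^ m = 0 := by
  let e := (ZMod.chineseRemainder hab).mapMatrix.trans (matrixProdRingEquiv ι _ _)
  have card_coprime :
      (Nat.card (Matrix ι ι (ZMod a))).Coprime (Nat.card (Matrix ι ι (ZMod b))) := by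
    simpa only [natCard_matrix, Nat.card_zmod] using hab.pow _ _
  rw [← sum_pow_prod_eq_zero_iff card_coprime, ← map_sum_pow_ringEquiv e,
    map_eq_zero_iff e e.injective]

lemma natCard_span_natCast_zmod (n d : ℕ) [NeZero n] :
    Nat.card (Ideal.span {(d : ZMod n)}) = n / n.gcd d := by
  rw [← ZMod.addOrderOf_coe d (NeZero.ne n), ← Nat.card_zmultiples]
  refine Nat.card_congr (Equiv.subtypeEquivRight fun x ↦ ?_)
  simp [Ideal.mem_span_singleton', AddSubgroup.mem_zmultiples_iff, ZMod.intCast_surjective.exists]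

theorem sum_matrix_zmod_pow_pow_eq_zero [Nontrivial ι] (b : ℕ) [NeZero b] {k : ℕ} (hk : 1 < k)
    (m : ℕ) : ∑ M : Matrix ι ι (ZMod (b ^ k)), M ^ m = 0 := by
  have pow_eq_zero {j : ℕ} (hj : k ≤ j) : (b : ZMod (b ^ k)) ^ j = 0 := by
    rw [← Nat.cast_pow, ZMod.natCast_eq_zero_iff]
    exact pow_dvd_pow b hj
  let I : Ideal (ZMod (b ^ k)) := .span {((b ^ (k - k / 2) : ℕ) : ZMod (b ^ k))}
  have I_sq : I ^ 2 = ⊥ := by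
    rw [Ideal.span_singleton_pow, Nat.cast_pow, ← pow_mul, pow_eq_zero (by lia),
      Ideal.span_singleton_zero]
  have card_I : Nat.card I = b ^ (k / 2) := by
    rw [natCard_span_natCast_zmod, Nat.gcd_eq_right (pow_dvd_pow b (by lia)),
      Nat.pow_div (by lia) (Nat.pos_of_neZero b), Nat.sub_sub_self (by lia)]
  refine sum_matrix_pow_eq_zero_of_ideal_sq_eq_bot I_sq ?_ m
  rw [card_I, Nat.cast_pow, ← pow_mul]
  refine pow_eq_zero ?_
  have one_lt_card : 1 < Nat.card ι := Finite.one_lt_card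
  calc k ≤ k / 2 * (2 * 2) := by lia
    _ ≤ k / 2 * (Nat.card ι * Nat.card ι) := by gcongr <;> exact one_lt_card

end ZModMatrix

section FinTwo

lemma matrix_fin_two_sq {R : Type*} [CommRing R] (M : Matrix (Fin 2) (Fin 2) R) :
    M ^ 2 = M.trace • M - M.det • (1 : Matrix (Fin 2) (Fin 2) R) := by
  ext i j
  fin_cases i <;> fin_cases j <;> simp [sq, mul_apply, trace_fin_two, det_fin_two] <;> ring

lemma sum_matrix_fin_two_eq_sum_trace {R N : Type*} [AddCommGroup R] [Fintype R] [AddCommMonoid N]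
    (f : Matrix (Fin 2) (Fin 2) R → N) :
    ∑ M, f M = ∑ t, ∑ a, ∑ b, ∑ c, f !![a, b; c, t - a] := by
  let e : R × R × R × R ≃ Matrix (Fin 2) (Fin 2) R :=
    { toFun := fun ⟨t, a, b, c⟩ ↦ !![a, b; c, t - a]
      invFun := fun M ↦ (M.trace, M 0 0, M 0 1, M 1 0)
      left_inv := fun _ ↦ by simp [trace_fin_two]
      right_inv := fun M ↦ by simp [trace_fin_two, ← eta_fin_two] }
  simp only [← e.sum_comp f, Fintype.sum_prod_type]
  rfl

variable {F : Type*} [Field F] [Fintype F]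

lemma sum_univ_eq_zero_of_two_lt_card (hF : 2 < Fintype.card F) : ∑ x : F, x = 0 := by
  simpa only [pow_one] using FiniteField.sum_pow_lt_card_sub_one F 1 (by lia)

lemma sum_mul_trace_det [DecidableEq F] (w g : F → F → F) :
    ∑ M : Matrix (Fin 2) (Fin 2) F, w (M 0 0) (M 0 1) * g M.trace M.det =
      (∑ a, ∑ b with b ≠ 0, w a b) * ∑ t, ∑ d, g t d := by
  -- `a * (t - a) - b * c` is the determinant of the matrix with trace `t` and entries `a, b, c`. It
  -- takes every value once as `c` varies if `b ≠ 0`; otherwise the `card F` equal terms cancel.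
  have sum_det (t a b : F) :
      ∑ c, g t (a * (t - a) - b * c) = if b ≠ 0 then ∑ d, g t d else 0 := by
    split_ifs with hb
    · exact ((Equiv.mulLeft₀ b hb).trans (Equiv.subLeft (a * (t - a)))).sum_comp (g t)
    · simp [not_ne_iff.1 hb]
  simp only [sum_matrix_fin_two_eq_sum_trace, trace_fin_two_of, det_fin_two_of, add_sub_cancel,
    of_apply, cons_val', cons_val_zero, cons_val_one, cons_val_fin_one, ← Finset.mul_sum, sum_det,
    mul_ite, mul_zero, ← Finset.sum_filter, ← Finset.sum_mul]

lemma sum_trace_det_eq_zero (g : F → F → F) :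
    ∑ M : Matrix (Fin 2) (Fin 2) F, g M.trace M.det = 0 := by
  classical
  simpa using sum_mul_trace_det (fun _ _ ↦ 1) g

lemma sum_trace_det_smul_eq_zero (hF : 2 < Fintype.card F) (g : F → F → F) :
    ∑ M : Matrix (Fin 2) (Fin 2) F, g M.trace M.det • M = 0 := by
  classical
  have h₀₀ : ∑ M : Matrix (Fin 2) (Fin 2) F, M 0 0 * g M.trace M.det = 0 := by
    rw [sum_mul_trace_det (fun a _ ↦ a) g, Finset.sum_comm]
    simp only [sum_univ_eq_zero_of_two_lt_card hF, Finset.sum_const_zero, zero_mul]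
  have h₀₁ : ∑ M : Matrix (Fin 2) (Fin 2) F, M 0 1 * g M.trace M.det = 0 := by
    simp [sum_mul_trace_det (fun _ b ↦ b) g]
  have h₁₀ : ∑ M : Matrix (Fin 2) (Fin 2) F, M 1 0 * g M.trace M.det = 0 := by
    rw [← h₀₁, ← (transposeAddEquiv (Fin 2) (Fin 2) F).toEquiv.sum_comp]
    simp
  have h₁₁ : ∑ M : Matrix (Fin 2) (Fin 2) F, M 1 1 * g M.trace M.det = 0 := by
    have eq_trace_sub (M : Matrix (Fin 2) (Fin 2) F) : M 1 1 * g M.trace M.det =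
        M.trace * g M.trace M.det - M 0 0 * g M.trace M.det := by
      rw [trace_fin_two]
      ring
    simp only [eq_trace_sub, Finset.sum_sub_distrib, h₀₀,
      sum_trace_det_eq_zero fun t d ↦ t * g t d, sub_zero]
  ext i j
  simp only [Matrix.sum_apply, Matrix.smul_apply, smul_eq_mul, mul_comm (g _ _), Matrix.zero_apply]
  fin_cases i <;> fin_cases j
  exacts [h₀₀, h₀₁, h₁₀, h₁₁]

theorem sum_trace_det_smul_pow_eq_zero (hF : 2 < Fintype.card F) (g : F → F → F) (m : ℕ) :
    ∑ M : Matrix (Fin 2) (Fin 2) F, g M.trace M.det • M ^ m = 0 := by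
  induction m using Nat.twoStepInduction generalizing g with
  | zero => simp only [pow_zero, ← Finset.sum_smul, sum_trace_det_eq_zero, zero_smul]
  | one => simpa only [pow_one] using sum_trace_det_smul_eq_zero hF g
  | more m ih ih' =>
    have recurrence (M : Matrix (Fin 2) (Fin 2) F) : g M.trace M.det • M ^ (m + 2) =
        (g M.trace M.det * M.trace) • M ^ (m + 1) - (g M.trace M.det * M.det) • M ^ m := by
      rw [pow_add, matrix_fin_two_sq, mul_sub, mul_smul_comm, mul_smul_comm, mul_one, ← pow_succ,
        smul_sub, smul_smul, smul_smul]
    simp only [recurrence, Finset.sum_sub_distrib, ih fun t d ↦ g t d * d,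
      ih' fun t d ↦ g t d * t, sub_zero]

theorem sum_matrix_fin_two_pow_eq_zero (hF : 2 < Fintype.card F) (m : ℕ) :
    ∑ M : Matrix (Fin 2) (Fin 2) F, M ^ m = 0 := by
  simpa only [one_smul] using sum_trace_det_smul_pow_eq_zero hF (fun _ _ ↦ 1) m

theorem sum_matrix_fin_two_zmod_two_pow_ne_zero_iff (m : ℕ) :
    ∑ M : Matrix (Fin 2) (Fin 2) (ZMod 2), M ^ m ≠ 0 ↔
      1 < m ∧ (m % 6 = 0 ∨ m % 6 = 1 ∨ m % 6 = 5) := by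
  have pow_eight : ∀ M : Matrix (Fin 2) (Fin 2) (ZMod 2), M ^ 8 = M ^ 2 := by decide
  have of_lt_eight : ∀ r < 8, (∑ M : Matrix (Fin 2) (Fin 2) (ZMod 2), M ^ r ≠ 0 ↔
      1 < r ∧ (r % 6 = 0 ∨ r % 6 = 1 ∨ r % 6 = 5)) := by decide
  induction m using Nat.strong_induction_on with
  | h m ih =>
    obtain hm | hm := lt_or_ge m 8
    · exact of_lt_eight m hm
    · obtain ⟨l, rfl⟩ := Nat.exists_eq_add_of_le' hm
      have pow_add_eight (M : Matrix (Fin 2) (Fin 2) (ZMod 2)) : M ^ (l + 8) = M ^ (l + 2) := by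
        rw [pow_add, pow_eight, ← pow_add]
      simp only [pow_add_eight]
      refine (ih (l + 2) (by lia)).trans ?_
      lia

theorem sum_matrix_fin_two_zmod_prime_pow_ne_zero_iff (p : ℕ) [Fact p.Prime] (m : ℕ) :
    ∑ M : Matrix (Fin 2) (Fin 2) (ZMod p), M ^ m ≠ 0 ↔
      p = 2 ∧ 1 < m ∧ (m % 6 = 0 ∨ m % 6 = 1 ∨ m % 6 = 5) := by
  obtain rfl | hp := eq_or_ne p 2
  · simpa only [true_and] using sum_matrix_fin_two_zmod_two_pow_ne_zero_iff m
  · have two_lt_card : 2 < Fintype.card (ZMod p) := by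
      rw [ZMod.card]
      exact lt_of_le_of_ne (Fact.out : p.Prime).two_le hp.symm
    simp [sum_matrix_fin_two_pow_eq_zero two_lt_card, hp]

end FinTwo

lemma prime_pow_mod_four_eq_two_iff {p k : ℕ} (hp : p.Prime) :
    p ^ k % 4 = 2 ↔ p = 2 ∧ k = 1 := by
  refine ⟨fun h ↦ ?_, by rintro ⟨rfl, rfl⟩; rfl⟩
  have two_dvd : 2 ∣ p := Nat.prime_two.dvd_of_dvd_pow (n := k) (by lia)
  obtain rfl := (Nat.prime_dvd_prime_iff_eq Nat.prime_two hp).1 two_dvd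
  refine ⟨rfl, ?_⟩
  match k with
  | 0 | 1 => lia
  | k + 2 => lia

lemma mul_mod_four_eq_two_iff_of_coprime {a b : ℕ} (hab : a.Coprime b) :
    a * b % 4 = 2 ↔ a % 4 = 2 ∨ b % 4 = 2 := by
  have not_both_even : ¬(a % 4 % 2 = 0 ∧ b % 4 % 2 = 0) := fun h ↦
    Nat.not_coprime_of_dvd_of_dvd one_lt_two (by lia) (by lia) hab
  have ha : a % 4 < 4 := Nat.mod_lt _ (by lia)
  have hb : b % 4 < 4 := Nat.mod_lt _ (by lia)
  rw [Nat.mul_mod]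
  interval_cases a % 4 <;> interval_cases b % 4 <;> lia

theorem stmt_8_general (n m : ℕ) [hn : NeZero n] :
    ∑ M : Matrix (Fin 2) (Fin 2) (ZMod n), M ^ m ≠ 0 ↔
      n % 4 = 2 ∧ 1 < m ∧ (m % 6 = 0 ∨ m % 6 = 1 ∨ m % 6 = 5) := by
  induction n using Nat.recOnPosPrimePosCoprime generalizing hn with
  | prime_pow p k hp hk =>
    have : Fact p.Prime := ⟨hp⟩
    rw [prime_pow_mod_four_eq_two_iff hp]
    obtain rfl | hk : k = 1 ∨ 1 < k := by lia
    · generalize hq : p ^ 1 = q at hn ⊢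
      obtain rfl : p = q := by rw [← hq, pow_one]
      simpa only [and_true] using sum_matrix_fin_two_zmod_prime_pow_ne_zero_iff p m
    · simp [sum_matrix_zmod_pow_pow_eq_zero p hk, hk.ne']
  | zero => exact absurd rfl hn.out
  | one => simp [Subsingleton.elim _ (0 : Matrix (Fin 2) (Fin 2) (ZMod 1))]
  | coprime a b ha hb hab iha ihb =>
    have : NeZero a := ⟨by lia⟩
    have : NeZero b := ⟨by lia⟩
    rw [mul_mod_four_eq_two_iff_of_coprime hab, or_and_right, ← iha, ← ihb, ne_eq,
      sum_matrix_zmod_mul_pow_eq_zero_iff hab, not_and_or]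

theorem stmt_8 (n : ℕ) (hn : 1 ≤ n) [NeZero n] :
    (∑ M : Matrix (Fin 2) (Fin 2) (ZMod n), M ^ n) ≠ 0 ↔ n % 12 = 6 := by
  rw [stmt_8_general]
  lia
end
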